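/- For every a ∈ ℝ and every T > 0 there exists a constant C > 0 such that for all t ∈ (0, T], all x ∈ ℝ, and all ε with 0 < ε ≤ min(1, t/√2): |(∫₀^t ∫_ℝ |Γ_a(t−s, x−y) − Γ_a(t−ε/√2−s, x+ε/√2−y) − Γ_a(t−ε/√2−s, x−ε/√2−y) + Γ_a(t−√2·ε−s, x−y)|² dy ds)^{1/2} − ε/2| ≤ C·ε^{3/2}. -/

import Mathlib

open MeasureTheory Real

/-- The damped wave kernel: the fundamental solution of the critically damped
wave operator `∂_tt − ∂_xx + a ∂_t + a²/4`. -/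
noncomputable def dampedKernel (a t x : ℝ) : ℝ :=
  if |x| < t then (1 / 2) * Real.exp (-(a * t) / 2) else 0

open scoped Convolution

/-!
In the characteristic coordinates `u = r + z`, `v = r - z` the damped wave kernel is the product
`φ(u) φ(v) / 2` with `φ(u) = e^{-au/4} 1_{u > 0}`. Hence its rectangular increment is
`Δφ(u) Δφ(v) / 2`, where `Δφ(u) = φ(u) - φ(u - δ)` and `δ = √2 ε`, and the squared norm is one
eighth of the integral of `Δφ(u)² Δφ(v)²` over the triangle `u, v > 0`, `u + v ≤ 2t`. This triangle
contains the square `(0, t]²` and is contained in `(0, 2t]²`, so `√8` times the norm lies between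
the integrals of `Δφ²` over `(0, t]` and over `(0, 2t]`. Both are `δ + O(δ²)`, because `Δφ²` is
`1 + O(δ)` on `(0, δ]` and `O(δ²)` beyond `δ`.
-/

section Convolution

variable {f g : ℝ → ℝ} {b c x : ℝ}

lemma integral_mul_comp_add_sub (f g : ℝ → ℝ) (r : ℝ) :
    ∫ z, f (r + z) * g (r - z) = (f ⋆ g) (2 * r) := by
  rw [convolution_lsmul, ← integral_add_left_eq_self (fun u => f u • g (2 * r - u)) r]
  refine integral_congr_ae (.of_forall fun z => ?_)
  simp only [smul_eq_mul, show 2 * r - (r + z) = r - z by ring]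

lemma intervalIntegral_integral_mul_comp_add_sub (f g : ℝ → ℝ) (t : ℝ) :
    ∫ r in 0..t, ∫ z, f (r + z) * g (r - z) = (∫ x in 0..2 * t, (f ⋆ g) x) / 2 := by
  simp only [integral_mul_comp_add_sub, intervalIntegral.integral_comp_mul_left _ two_ne_zero,
    mul_zero, smul_eq_mul, inv_mul_eq_div]

lemma convolution_eq_convolution_indicator_Ioc (hf : ∀ u ≤ 0, f u = 0) (hg : ∀ u ≤ 0, g u = 0)
    (hx : x ≤ b) : (f ⋆ g) x = ((Set.Ioc 0 b).indicator f ⋆ (Set.Ioc 0 b).indicator g) x := by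
  refine integral_congr_ae (.of_forall fun u => ?_)
  rcases le_or_gt u 0 with hu | hu
  · simp [hf u hu, Set.indicator_apply]
  rcases le_or_gt (x - u) 0 with hv | hv
  · simp [hg _ hv, Set.indicator_apply]
  · have hu' : u ∈ Set.Ioc 0 b := ⟨hu, by linarith⟩
    have hv' : x - u ∈ Set.Ioc 0 b := ⟨hv, by linarith⟩
    simp only [Set.indicator_of_mem hu', Set.indicator_of_mem hv']

lemma convolution_nonneg (hf : 0 ≤ f) (hg : 0 ≤ g) (x : ℝ) : 0 ≤ (f ⋆ g) x :=
  integral_nonneg fun u => mul_nonneg (hf u) (hg (x - u))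

lemma convolution_mono_of_nonneg {f' g' : ℝ → ℝ} (hf : 0 ≤ f) (hg : 0 ≤ g) (hff' : f ≤ f')
    (hgg' : g ≤ g') (hx : ConvolutionExistsAt f' g' x (.lsmul ℝ ℝ)) :
    (f ⋆ g) x ≤ (f' ⋆ g') x :=
  integral_mono_of_nonneg (.of_forall fun u => mul_nonneg (hf u) (hg (x - u))) hx
    (.of_forall fun u => mul_le_mul (hff' u) (hgg' (x - u)) (hg _) ((hf u).trans (hff' u)))

lemma integral_convolution_indicator_Ioc (hb : 0 ≤ b) (hc : 0 ≤ c)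
    (hf : IntegrableOn f (Set.Ioc 0 b)) (hg : IntegrableOn g (Set.Ioc 0 c)) :
    ∫ x, ((Set.Ioc 0 b).indicator f ⋆ (Set.Ioc 0 c).indicator g) x =
      (∫ u in 0..b, f u) * ∫ v in 0..c, g v := by
  rw [integral_convolution _ (hf.integrable_indicator measurableSet_Ioc)
    (hg.integrable_indicator measurableSet_Ioc), integral_indicator measurableSet_Ioc,
    integral_indicator measurableSet_Ioc, intervalIntegral.integral_of_le hb,
    intervalIntegral.integral_of_le hc]
  rfl

lemma support_convolution_indicator_Ioc_subset :
    Function.support ((Set.Ioc 0 b).indicator f ⋆ (Set.Ioc 0 c).indicator g) ⊆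
      Set.Ioc 0 (b + c) := by
  refine (support_convolution_subset _).trans ?_
  rintro _ ⟨u, hu, v, hv, rfl⟩
  have hu := Set.support_indicator_subset hu
  have hv := Set.support_indicator_subset hv
  exact ⟨add_pos hu.1 hv.1, add_le_add hu.2 hv.2⟩

lemma intervalIntegral_convolution_le_mul (hb : 0 ≤ b) (hf : ∀ u ≤ 0, f u = 0)
    (hg : ∀ u ≤ 0, g u = 0) (hf₀ : 0 ≤ f) (hg₀ : 0 ≤ g)
    (hfi : IntegrableOn f (Set.Ioc 0 b)) (hgi : IntegrableOn g (Set.Ioc 0 b)) :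
    ∫ x in 0..b, (f ⋆ g) x ≤ (∫ u in 0..b, f u) * ∫ v in 0..b, g v := by
  rw [← integral_convolution_indicator_Ioc hb hb hfi hgi, intervalIntegral.integral_of_le hb,
    setIntegral_congr_fun measurableSet_Ioc
      fun x hx => convolution_eq_convolution_indicator_Ioc hf hg hx.2]
  refine setIntegral_le_integral ?_ (.of_forall ?_)
  · exact (hfi.integrable_indicator measurableSet_Ioc).integrable_convolution _
      (hgi.integrable_indicator measurableSet_Ioc)
  · exact convolution_nonneg (Set.indicator_nonneg fun u _ => hf₀ u)
      (Set.indicator_nonneg fun u _ => hg₀ u)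

lemma mul_le_intervalIntegral_convolution (hb : 0 ≤ b) (hc : 0 ≤ c) (hf : ∀ u ≤ 0, f u = 0)
    (hg : ∀ u ≤ 0, g u = 0) (hf₀ : 0 ≤ f) (hg₀ : 0 ≤ g)
    (hfi : IntegrableOn f (Set.Ioc 0 (b + c))) (hgi : IntegrableOn g (Set.Ioc 0 (b + c))) :
    (∫ u in 0..b, f u) * ∫ v in 0..c, g v ≤ ∫ x in 0..b + c, (f ⋆ g) x := by
  have hIb : Set.Ioc 0 b ⊆ Set.Ioc 0 (b + c) := Set.Ioc_subset_Ioc_right (by linarith)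
  have hIc : Set.Ioc 0 c ⊆ Set.Ioc 0 (b + c) := Set.Ioc_subset_Ioc_right (by linarith)
  have hfi' := hfi.integrable_indicator measurableSet_Ioc
  have hgi' := hgi.integrable_indicator measurableSet_Ioc
  rw [← integral_convolution_indicator_Ioc hb hc (hfi.mono_set hIb) (hgi.mono_set hIc),
    intervalIntegral.integral_of_le (by positivity),
    setIntegral_congr_fun measurableSet_Ioc
      fun x hx => convolution_eq_convolution_indicator_Ioc hf hg hx.2,
    ← setIntegral_eq_integral_of_forall_compl_eq_zero fun x hx =>
      Function.notMem_support.1 fun h => hx (support_convolution_indicator_Ioc_subset h)]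
  have hf₀' : 0 ≤ (Set.Ioc 0 b).indicator f := Set.indicator_nonneg fun u _ => hf₀ u
  have hg₀' : 0 ≤ (Set.Ioc 0 c).indicator g := Set.indicator_nonneg fun u _ => hg₀ u
  refine integral_mono_of_nonneg (.of_forall (convolution_nonneg hf₀' hg₀'))
    (hfi'.integrable_convolution _ hgi').integrableOn (ae_restrict_of_ae ?_)
  filter_upwards [hfi'.ae_convolution_exists (.lsmul ℝ ℝ) hgi'] with x hx
  exact convolution_mono_of_nonneg hf₀' hg₀' (Set.indicator_le_indicator_of_subset hIb hf₀)
    (Set.indicator_le_indicator_of_subset hIc hg₀) hx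

lemma sqrt_intervalIntegral_convolution_self_mem_Icc (hb : 0 ≤ b) (hf : ∀ u ≤ 0, f u = 0)
    (hf₀ : 0 ≤ f) (hfi : IntegrableOn f (Set.Ioc 0 (2 * b))) :
    √(∫ x in 0..2 * b, (f ⋆ f) x) ∈ Set.Icc (∫ u in 0..b, f u) (∫ u in 0..2 * b, f u) := by
  have h2b : 0 ≤ 2 * b := by positivity
  constructor
  · rw [two_mul] at hfi ⊢
    refine le_sqrt_of_sq_le ((sq _).trans_le ?_)
    exact mul_le_intervalIntegral_convolution hb hb hf hf hf₀ hf₀ hfi hfi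
  · refine sqrt_le_iff.2 ⟨intervalIntegral.integral_nonneg h2b fun u _ => hf₀ u, ?_⟩
    rw [sq]
    exact intervalIntegral_convolution_le_mul h2b hf hf hf₀ hf₀ hfi hfi

end Convolution

section Characteristic

variable {a δ s u : ℝ}

lemma abs_exp_sub_one_le_mul_exp_abs (x : ℝ) : |exp x - 1| ≤ |x| * exp |x| := by
  have := Complex.norm_exp_sub_sum_le_norm_mul_exp (x : ℂ) 1
  simpa [← Complex.ofReal_exp, ← Complex.ofReal_one, ← Complex.ofReal_sub] using this

/-- The function `u ↦ e^{-au/4} 1_{u > 0}`, which is the factor of the damped wave kernel in each of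
the characteristic coordinates `t + x` and `t - x`. -/
noncomputable def characteristicFactor (a : ℝ) : ℝ → ℝ :=
  (Set.Ioi 0).indicator fun u => exp (-(a * u) / 4)

/-- The increment of `characteristicFactor a` over `[u - δ, u]`, in which the rectangular increment
of the damped wave kernel factorizes. -/
noncomputable def characteristicIncrement (a δ u : ℝ) : ℝ :=
  characteristicFactor a u - characteristicFactor a (u - δ)

lemma dampedKernel_eq_characteristicFactor_mul (a t x : ℝ) :
    dampedKernel a t x =
      1 / 2 * (characteristicFactor a (t + x) * characteristicFactor a (t - x)) := by
  have hcone : |x| < t ↔ 0 < t + x ∧ 0 < t - x := by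
    rw [abs_lt, neg_lt_iff_pos_add', sub_pos]
  have hexp : exp (-(a * t) / 2) = exp (-(a * (t + x)) / 4) * exp (-(a * (t - x)) / 4) := by
    rw [← exp_add]; ring_nf
  simp only [dampedKernel, characteristicFactor, Set.indicator_apply, Set.mem_Ioi, hcone, hexp,
    mul_ite, ite_mul, mul_zero, zero_mul, ite_and]
  split_ifs <;> rfl

lemma dampedKernel_increment_eq (a δ t x : ℝ) :
    dampedKernel a t x - dampedKernel a (t - δ / 2) (x + δ / 2)
        - dampedKernel a (t - δ / 2) (x - δ / 2) + dampedKernel a (t - δ) x =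
      1 / 2 * (characteristicIncrement a δ (t + x) * characteristicIncrement a δ (t - x)) := by
  simp only [dampedKernel_eq_characteristicFactor_mul, characteristicIncrement]
  ring_nf

lemma measurable_characteristicFactor (a : ℝ) : Measurable (characteristicFactor a) :=
  (by fun_prop : Measurable fun u => exp (-(a * u) / 4)).indicator measurableSet_Ioi

lemma abs_characteristicFactor_le (a u : ℝ) : |characteristicFactor a u| ≤ exp (-(a * u) / 4) := by
  rw [← abs_exp (-(a * u) / 4)]
  exact norm_indicator_le_norm_self (fun u => exp (-(a * u) / 4)) u

lemma locallyIntegrable_characteristicIncrement_sq (a δ : ℝ) :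
    LocallyIntegrable (characteristicIncrement a δ ^ 2) := by
  have hbound : Continuous fun u => (exp (-(a * u) / 4) + exp (-(a * (u - δ)) / 4)) ^ 2 := by
    fun_prop
  refine hbound.locallyIntegrable.mono ?_ (.of_forall fun u => ?_)
  · have := measurable_characteristicFactor a
    unfold characteristicIncrement
    fun_prop
  · rw [Pi.pow_apply, norm_pow, norm_pow]
    gcongr
    refine (abs_sub _ _).trans ((add_le_add ?_ ?_).trans (le_abs_self _)) <;>
      exact abs_characteristicFactor_le _ _

lemma characteristicIncrement_of_nonpos (hδ : 0 ≤ δ) (hu : u ≤ 0) :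
    characteristicIncrement a δ u = 0 := by
  rw [characteristicIncrement, characteristicFactor, Set.indicator_of_notMem (by simpa using hu),
    Set.indicator_of_notMem (by simpa using hu.trans hδ), sub_zero]

lemma characteristicIncrement_of_mem_Ioc (hu : u ∈ Set.Ioc 0 δ) :
    characteristicIncrement a δ u = exp (-(a * u) / 4) := by
  rw [characteristicIncrement, characteristicFactor, Set.indicator_of_mem (Set.mem_Ioi.2 hu.1),
    Set.indicator_of_notMem (by simpa using hu.2), sub_zero]

lemma characteristicIncrement_of_lt (hδ : 0 ≤ δ) (hu : δ < u) :
    characteristicIncrement a δ u = exp (-(a * (u - δ)) / 4) * (exp (-(a * δ) / 4) - 1) := by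
  rw [characteristicIncrement, characteristicFactor,
    Set.indicator_of_mem (Set.mem_Ioi.2 (hδ.trans_lt hu)),
    Set.indicator_of_mem (Set.mem_Ioi.2 (sub_pos.2 hu)), mul_sub_one, ← exp_add]
  ring_nf

lemma abs_characteristicIncrement_sq_sub_one_le (hu : u ∈ Set.Ioc 0 δ) :
    |characteristicIncrement a δ u ^ 2 - 1| ≤ |a| * δ / 2 * exp (|a| * δ / 2) := by
  have habs : |-(a * u) / 2| = |a| * u / 2 := by
    rw [abs_div, abs_neg, abs_mul, abs_of_pos hu.1, abs_two]
  calc |characteristicIncrement a δ u ^ 2 - 1| = |exp (-(a * u) / 2) - 1| := by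
        rw [characteristicIncrement_of_mem_Ioc hu, ← exp_nat_mul]
        ring_nf
    _ ≤ |a| * u / 2 * exp (|a| * u / 2) := by
        simpa only [habs] using abs_exp_sub_one_le_mul_exp_abs (-(a * u) / 2)
    _ ≤ |a| * δ / 2 * exp (|a| * δ / 2) := by
        have := hu.1.le.trans hu.2
        gcongr <;> exact hu.2

lemma characteristicIncrement_sq_le (hδ : 0 ≤ δ) (hu : δ < u) :
    characteristicIncrement a δ u ^ 2 ≤ (|a| * δ / 4) ^ 2 * exp (|a| * u / 2) := by
  have habs {v : ℝ} (hv : 0 ≤ v) : |-(a * v) / 4| = |a| * v / 4 := by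
    rw [abs_div, abs_neg, abs_mul, abs_of_nonneg hv, abs_of_pos (four_pos (α := ℝ))]
  have hle : |characteristicIncrement a δ u| ≤
      exp (|a| * (u - δ) / 4) * (|a| * δ / 4 * exp (|a| * δ / 4)) := by
    rw [characteristicIncrement_of_lt hδ hu, abs_mul, abs_exp, ← habs hδ,
      ← habs (sub_nonneg.2 hu.le)]
    gcongr
    · exact le_abs_self _
    · exact abs_exp_sub_one_le_mul_exp_abs _
  calc characteristicIncrement a δ u ^ 2
      ≤ (exp (|a| * (u - δ) / 4) * (|a| * δ / 4 * exp (|a| * δ / 4))) ^ 2 :=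
        sq_le_sq.2 (hle.trans (le_abs_self _))
    _ = (|a| * δ / 4) ^ 2 * exp (|a| * u / 2) := by
        rw [mul_left_comm, ← exp_add, mul_pow, ← exp_nat_mul]
        ring_nf

lemma intervalIntegrable_characteristicIncrement_sq (a δ b c : ℝ) :
    IntervalIntegrable (fun u => characteristicIncrement a δ u ^ 2) volume b c :=
  ((locallyIntegrable_characteristicIncrement_sq a δ).integrableOn_isCompact
    isCompact_uIcc).intervalIntegrable

lemma abs_integral_head_characteristicIncrement_sq_sub_le (hδ : 0 ≤ δ) :
    |(∫ u in 0..δ, characteristicIncrement a δ u ^ 2) - δ| ≤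
      |a| * δ / 2 * exp (|a| * δ / 2) * δ := by
  have h := intervalIntegral.norm_integral_le_of_norm_le_const (a := 0) (b := δ)
    (f := fun u => characteristicIncrement a δ u ^ 2 - 1) fun u hu =>
      abs_characteristicIncrement_sq_sub_one_le (a := a) (Set.uIoc_of_le hδ ▸ hu)
  rwa [intervalIntegral.integral_sub (intervalIntegrable_characteristicIncrement_sq a δ 0 δ)
    intervalIntegrable_const, intervalIntegral.integral_const, sub_zero, smul_eq_mul, mul_one,
    abs_of_nonneg hδ] at h

lemma abs_integral_tail_characteristicIncrement_sq_le (hδ : 0 ≤ δ) (hs : δ ≤ s) :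
    |∫ u in δ..s, characteristicIncrement a δ u ^ 2| ≤
      (|a| * δ / 4) ^ 2 * exp (|a| * s / 2) * (s - δ) := by
  rw [← norm_eq_abs, ← abs_of_nonneg (sub_nonneg.2 hs)]
  refine intervalIntegral.norm_integral_le_of_norm_le_const fun u hu => ?_
  rw [Set.uIoc_of_le hs] at hu
  rw [norm_of_nonneg (sq_nonneg _)]
  refine (characteristicIncrement_sq_le hδ hu.1).trans ?_
  gcongr
  exact hu.2

lemma abs_integral_characteristicIncrement_sq_sub_le (hδ : 0 ≤ δ) (hs : δ ≤ s) :
    |(∫ u in 0..s, characteristicIncrement a δ u ^ 2) - δ| ≤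
      |a| / 2 * exp (|a| * s) * δ ^ 2 := by
  rw [← intervalIntegral.integral_add_adjacent_intervals
    (intervalIntegrable_characteristicIncrement_sq a δ 0 δ)
    (intervalIntegrable_characteristicIncrement_sq a δ δ s), add_sub_right_comm]
  calc _ ≤ |a| * δ / 2 * exp (|a| * δ / 2) * δ
        + (|a| * δ / 4) ^ 2 * exp (|a| * s / 2) * (s - δ) :=
        (abs_add_le _ _).trans (add_le_add
          (abs_integral_head_characteristicIncrement_sq_sub_le hδ)
          (abs_integral_tail_characteristicIncrement_sq_le hδ hs))
    _ ≤ |a| * δ / 2 * exp (|a| * s / 2) * δ + (|a| * δ / 4) ^ 2 * exp (|a| * s / 2) * (4 * s) := by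
        gcongr
        linarith
    _ = |a| / 2 * ((|a| * s / 2 + 1) * exp (|a| * s / 2)) * δ ^ 2 := by ring
    _ ≤ |a| / 2 * (exp (|a| * s / 2) * exp (|a| * s / 2)) * δ ^ 2 := by
        gcongr
        exact add_one_le_exp _
    _ = |a| / 2 * exp (|a| * s) * δ ^ 2 := by rw [← exp_add, add_halves]

end Characteristic

lemma setIntegral_Ioc_integral_comp_sub_left {t : ℝ} (G : ℝ → ℝ → ℝ) (ht : 0 ≤ t) (x : ℝ) :
    ∫ s in Set.Ioc 0 t, ∫ y, G (t - s) (x - y) = ∫ r in 0..t, ∫ z, G r z := by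
  simp only [integral_sub_left_eq_self (G _) volume x]
  rw [← intervalIntegral.integral_of_le ht,
    intervalIntegral.integral_comp_sub_left (fun r => ∫ z, G r z), sub_self, sub_zero]

lemma integral_sq_dampedKernel_increment_eq {t : ℝ} (a δ x : ℝ) (ht : 0 ≤ t) :
    (∫ s in Set.Ioc (0 : ℝ) t, ∫ y : ℝ,
        |dampedKernel a (t - s) (x - y)
          - dampedKernel a (t - δ / 2 - s) (x + δ / 2 - y)
          - dampedKernel a (t - δ / 2 - s) (x - δ / 2 - y)
          + dampedKernel a (t - δ - s) (x - y)| ^ 2) =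
      (∫ v in 0..2 * t,
        (characteristicIncrement a δ ^ 2 ⋆ characteristicIncrement a δ ^ 2) v) / 8 := by
  have hfactor (s y : ℝ) : |dampedKernel a (t - s) (x - y)
        - dampedKernel a (t - δ / 2 - s) (x + δ / 2 - y)
        - dampedKernel a (t - δ / 2 - s) (x - δ / 2 - y)
        + dampedKernel a (t - δ - s) (x - y)| ^ 2 =
      1 / 4 * ((characteristicIncrement a δ ^ 2) (t - s + (x - y)) *
        (characteristicIncrement a δ ^ 2) (t - s - (x - y))) := by
    rw [sub_right_comm t (δ / 2), sub_right_comm t δ, sub_right_comm x, add_sub_right_comm,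
      dampedKernel_increment_eq, sq_abs, Pi.pow_apply, Pi.pow_apply]
    ring
  simp only [hfactor]
  rw [setIntegral_Ioc_integral_comp_sub_left (fun r z => 1 / 4 *
    ((characteristicIncrement a δ ^ 2) (r + z) * (characteristicIncrement a δ ^ 2) (r - z))) ht x]
  simp only [integral_const_mul, intervalIntegral.integral_const_mul]
  rw [intervalIntegral_integral_mul_comp_add_sub]
  ring

lemma abs_sqrt_integral_convolution_sub_le {a δ t : ℝ} (hδ : 0 ≤ δ) (ht : δ ≤ t) :
    |√(∫ v in 0..2 * t,
        (characteristicIncrement a δ ^ 2 ⋆ characteristicIncrement a δ ^ 2) v) - δ| ≤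
      |a| / 2 * exp (2 * |a| * t) * δ ^ 2 := by
  set w := characteristicIncrement a δ ^ 2
  have ht₀ : 0 ≤ t := hδ.trans ht
  have hw : ∀ u ≤ 0, w u = 0 := fun u hu => by
    simp only [w, Pi.pow_apply, characteristicIncrement_of_nonpos hδ hu, zero_pow two_ne_zero]
  have hwi : IntegrableOn w (Set.Ioc 0 (2 * t)) :=
    (intervalIntegrable_characteristicIncrement_sq a δ 0 (2 * t)).1
  obtain ⟨hlower, hupper⟩ := sqrt_intervalIntegral_convolution_self_mem_Icc ht₀ hw
    (fun u => sq_nonneg _) hwi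
  have hnear : |(∫ u in 0..t, w u) - δ| ≤ |a| / 2 * exp (2 * |a| * t) * δ ^ 2 := by
    refine (abs_integral_characteristicIncrement_sq_sub_le hδ ht).trans ?_
    gcongr
    linarith [abs_nonneg a]
  have hfar : |(∫ u in 0..2 * t, w u) - δ| ≤ |a| / 2 * exp (2 * |a| * t) * δ ^ 2 := by
    refine (abs_integral_characteristicIncrement_sq_sub_le hδ (by linarith)).trans_eq ?_
    ring_nf
  rw [abs_le] at hnear hfar ⊢
  constructor <;> linarith

theorem stmt9_general {a t ε : ℝ} (x : ℝ) (hε : 0 ≤ ε) (hεt : ε ≤ t / √2) :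
    |√(∫ s in Set.Ioc (0 : ℝ) t, ∫ y : ℝ,
          |dampedKernel a (t - s) (x - y)
            - dampedKernel a (t - ε / √2 - s) (x + ε / √2 - y)
            - dampedKernel a (t - ε / √2 - s) (x - ε / √2 - y)
            + dampedKernel a (t - √2 * ε - s) (x - y)| ^ 2)
        - ε / 2| ≤ |a| * exp (2 * |a| * t) * ε ^ 2 := by
  have hδt : √2 * ε ≤ t := by rwa [le_div_iff₀' (by positivity)] at hεt
  have ht : 0 ≤ t := le_trans (by positivity) hδt
  have h22 : √2 ^ 2 = 2 := sq_sqrt two_pos.le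
  have hhalf : ε / √2 = √2 * ε / 2 := by field_simp; rw [h22]
  have h8 : √8 = 2 * √2 := by
    rw [show (8 : ℝ) = 2 ^ 2 * 2 by norm_num, sqrt_mul (by positivity), sqrt_sq two_pos.le]
  rw [hhalf, integral_sq_dampedKernel_increment_eq a _ x ht, sqrt_div' _ (by norm_num), h8]
  have hmain := abs_sqrt_integral_convolution_sub_le (a := a) (by positivity) hδt
  set Q := ∫ v in 0..2 * t, (characteristicIncrement a (√2 * ε) ^ 2 ⋆
    characteristicIncrement a (√2 * ε) ^ 2) v
  calc |√Q / (2 * √2) - ε / 2| = |(√Q - √2 * ε) / (2 * √2)| := by congr 1; field_simp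
    _ = |√Q - √2 * ε| / (2 * √2) := by rw [abs_div, abs_of_pos (by positivity : 0 < 2 * √2)]
    _ ≤ |√Q - √2 * ε| := div_le_self (abs_nonneg _) (by linarith [one_lt_sqrt_two])
    _ ≤ |a| / 2 * exp (2 * |a| * t) * (√2 * ε) ^ 2 := hmain
    _ = |a| * exp (2 * |a| * t) * ε ^ 2 := by rw [mul_pow, h22]; ring

theorem stmt9 (a : ℝ) (T : ℝ) (hT : 0 < T) :
    ∃ C : ℝ, 0 < C ∧ ∀ t ∈ Set.Ioc (0 : ℝ) T, ∀ x : ℝ, ∀ ε : ℝ,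
      0 < ε → ε ≤ min 1 (t / Real.sqrt 2) →
      |Real.sqrt (∫ s in Set.Ioc (0 : ℝ) t, ∫ y : ℝ,
          |dampedKernel a (t - s) (x - y)
            - dampedKernel a (t - ε / Real.sqrt 2 - s) (x + ε / Real.sqrt 2 - y)
            - dampedKernel a (t - ε / Real.sqrt 2 - s) (x - ε / Real.sqrt 2 - y)
            + dampedKernel a (t - Real.sqrt 2 * ε - s) (x - y)| ^ 2)
        - ε / 2| ≤ C * ε ^ (3 / 2 : ℝ) := by
  refine ⟨|a| * exp (2 * |a| * T) + 1, by positivity, fun t ht x ε hε h => ?_⟩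
  obtain ⟨hε1, hεt⟩ := le_min_iff.1 h
  calc _ ≤ |a| * exp (2 * |a| * t) * ε ^ (2 : ℝ) :=
        (rpow_two ε).symm ▸ stmt9_general x hε.le hεt
    _ ≤ (|a| * exp (2 * |a| * T) + 1) * ε ^ (3 / 2 : ℝ) := by
        gcongr ?_ * ?_
        · exact le_add_of_le_of_nonneg (by gcongr; exact ht.2) zero_le_one
        · exact rpow_le_rpow_of_exponent_ge hε hε1 (by norm_num)
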